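/- arXiv:2306.05615 — 5 statements merged into one kernel-verified Lean document; each statement's English description precedes it below -/
import Mathlib

section
/- For every subset X ⊆ V, the minimum over all subsets S ⊆ V of (1/α_{i(S)})·R_{i(S)}(S, χ_X) equals min_{i∈[m]} f_i(X)/α_i. Consequently, for every nonempty family 𝒳 ⊆ 2^V, max_{X∈𝒳} min_{i∈[m]} f_i(X)/α_i = max_{X∈𝒳} min_{S⊆V} (1/α_{i(S)})·R_{i(S)}(S, χ_X); i.e., it suffices to impose, for each S ⊆ V, only the single submodular inequality with index i(S) to obtain an exact reformulation of the robust submodular maximization problem. -/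
/-!
For a submodular `g`, adding the elements of a set one at a time shows that the increment
`g (S ∪ T) - g S` is at most the sum of the marginals at `S` and at least the sum of the smallest
possible marginals, those at `V ∖ {j}`. Going from `X` to `X ∪ S = S ∪ X` and back to `S` with
these two bounds gives `g X ≤ R(S, χ_X)` for every `S`, with equality at `S = X`.

Hence each term of the minimum over `S` is at least `f_{i(S)}(X) / α_{i(S)}`, which is at least
`min_i f_i(X) / α_i`, while the term `S = X` equals `f_{i(X)}(X) / α_{i(X)}`, which is that minimum
by the choice of `i(X)`.
-/

open Finset

/-- A set function on subsets of `V = Fin n` is submodular: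
marginal contributions diminish as the set grows. -/
def SubmodularFn {n : ℕ} (f : Finset (Fin n) → ℝ) : Prop :=
  ∀ X' X : Finset (Fin n), X' ⊆ X → ∀ j : Fin n, j ∉ X →
    f (insert j X') - f X' ≥ f (insert j X) - f X

/-- A set function is monotone (non-decreasing). -/
def MonotoneFn {n : ℕ} (f : Finset (Fin n) → ℝ) : Prop :=
  ∀ X Y : Finset (Fin n), X ⊆ Y → f X ≤ f Y

/-- The marginal value `ρ_j(S) = f(S ∪ {j}) − f(S)`. -/
def marg {n : ℕ} (f : Finset (Fin n) → ℝ) (j : Fin n) (S : Finset (Fin n)) : ℝ :=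
  f (insert j S) - f S

/-- Right-hand side of the submodular (Nemhauser–Wolsey) inequality generated at `S`,
evaluated at the (binary) point `x`:
`R(S,x) = f(S) − Σ_{j∈S} ρ_j(V∖{j})(1−x_j) + Σ_{j∈V∖S} ρ_j(S)·x_j`. -/
def Rineq {n : ℕ} (f : Finset (Fin n) → ℝ) (S : Finset (Fin n)) (x : Fin n → ℝ) : ℝ :=
  f S - ∑ j ∈ S, marg f j (Finset.univ \ {j}) * (1 - x j)
      + ∑ j ∈ Finset.univ \ S, marg f j S * x j

/-- Indicator (characteristic) vector `χ_X ∈ {0,1}^V` of `X ⊆ V`. -/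
def chi {n : ℕ} (X : Finset (Fin n)) : Fin n → ℝ := fun j => if j ∈ X then 1 else 0

theorem SubmodularFn.union_sub_le {n : ℕ} {g : Finset (Fin n) → ℝ} (hg : SubmodularFn g)
    (S T : Finset (Fin n)) (h : Disjoint S T) :
    g (S ∪ T) - g S ≤ ∑ j ∈ T, marg g j S := by
  induction T using Finset.induction_on with
  | empty => simp
  | insert a T ha ih =>
    rw [Finset.disjoint_insert_right] at h
    rw [Finset.sum_insert ha, Finset.union_insert]
    have h1 := ih h.2
    have h2 := hg S (S ∪ T) Finset.subset_union_left a (by simp [h.1, ha])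
    unfold marg at *
    linarith

theorem SubmodularFn.le_union_sub {n : ℕ} {g : Finset (Fin n) → ℝ} (hg : SubmodularFn g)
    (X T : Finset (Fin n)) (h : Disjoint X T) :
    ∑ j ∈ T, marg g j (Finset.univ \ {j}) ≤ g (X ∪ T) - g X := by
  induction T using Finset.induction_on with
  | empty => simp
  | insert a T ha ih =>
    rw [Finset.disjoint_insert_right] at h
    rw [Finset.sum_insert ha, Finset.union_insert]
    have h1 := ih h.2
    have hs : X ∪ T ⊆ Finset.univ \ {a} := by
      intro j hj
      have : j ≠ a := by
        rintro rfl
        simp [h.1, ha] at hj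
      simp [this]
    have h2 := hg (X ∪ T) (Finset.univ \ {a}) hs a (by simp)
    unfold marg at *
    linarith

/-- At an indicator vector only the elements of `S ∖ X` and `X ∖ S` contribute. -/
theorem Rineq_chi {n : ℕ} (g : Finset (Fin n) → ℝ) (S X : Finset (Fin n)) :
    Rineq g S (chi X) = g S - ∑ j ∈ S \ X, marg g j (Finset.univ \ {j})
      + ∑ j ∈ X \ S, marg g j S := by
  have h1 : ∑ j ∈ S, marg g j (Finset.univ \ {j}) * (1 - chi X j)
      = ∑ j ∈ S \ X, marg g j (Finset.univ \ {j}) := by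
    rw [Finset.sdiff_eq_filter, Finset.sum_filter]
    refine Finset.sum_congr rfl fun j _ => ?_
    by_cases hj : j ∈ X <;> simp [chi, hj]
  have h2 : ∑ j ∈ Finset.univ \ S, marg g j S * chi X j = ∑ j ∈ X \ S, marg g j S := by
    have hX : X \ S = (Finset.univ \ S).filter (· ∈ X) := by
      ext j
      simp [and_comm]
    rw [hX, Finset.sum_filter]
    refine Finset.sum_congr rfl fun j _ => ?_
    by_cases hj : j ∈ X <;> simp [chi, hj]
  rw [Rineq, h1, h2]

theorem SubmodularFn.le_Rineq {n : ℕ} {g : Finset (Fin n) → ℝ} (hg : SubmodularFn g)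
    (S X : Finset (Fin n)) : g X ≤ Rineq g S (chi X) := by
  have h1 := hg.union_sub_le S (X \ S) Finset.disjoint_sdiff
  have h2 := hg.le_union_sub X (S \ X) Finset.disjoint_sdiff
  rw [Finset.union_sdiff_self_eq_union] at h1 h2
  rw [Finset.union_comm X S] at h2
  rw [Rineq_chi]
  linarith

/-- For every `X ⊆ V`, the minimum over all `S ⊆ V` of
`(1/α_{i(S)})·R_{i(S)}(S, χ_X)` equals `min_{i∈[m]} f_i(X)/α_i`; consequently, over any
nonempty family `𝒳`, maximizing the worst-case scaled objective equals maximizing the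
minimum over the single submodular inequalities indexed by `i(S)`. -/
theorem stmt_0 {n m : ℕ} (f : Fin m → Finset (Fin n) → ℝ) (α : Fin m → ℝ)
    (hm : (Finset.univ : Finset (Fin m)).Nonempty)
    (hsub : ∀ i, SubmodularFn (f i)) (hmono : ∀ i, MonotoneFn (f i))
    (hnorm : ∀ i, f i ∅ = 0) (hα : ∀ i, 0 < α i)
    (iS : Finset (Fin n) → Fin m)
    (hiS : ∀ S : Finset (Fin n),
      f (iS S) S / α (iS S) = Finset.univ.inf' hm (fun i => f i S / α i)) :
    (∀ X : Finset (Fin n),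
      (Finset.univ : Finset (Finset (Fin n))).inf' ⟨∅, Finset.mem_univ _⟩
        (fun S => (1 / α (iS S)) * Rineq (f (iS S)) S (chi X))
      = Finset.univ.inf' hm (fun i => f i X / α i)) ∧
    ∀ (𝒳 : Finset (Finset (Fin n))) (h𝒳 : 𝒳.Nonempty),
      𝒳.sup' h𝒳 (fun X => Finset.univ.inf' hm (fun i => f i X / α i))
      = 𝒳.sup' h𝒳 (fun X =>
          (Finset.univ : Finset (Finset (Fin n))).inf' ⟨∅, Finset.mem_univ _⟩
            (fun S => (1 / α (iS S)) * Rineq (f (iS S)) S (chi X))) := by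
  have key : ∀ X : Finset (Fin n),
      (Finset.univ : Finset (Finset (Fin n))).inf' ⟨∅, Finset.mem_univ _⟩
        (fun S => (1 / α (iS S)) * Rineq (f (iS S)) S (chi X))
      = Finset.univ.inf' hm (fun i => f i X / α i) := by
    intro X
    apply le_antisymm
    · refine (Finset.inf'_le _ (Finset.mem_univ X)).trans ?_
      rw [← hiS X, Rineq_chi]
      simp [div_eq_inv_mul]
    · refine Finset.le_inf' _ _ fun S _ => ?_
      refine (Finset.inf'_le _ (Finset.mem_univ (iS S))).trans ?_
      rw [div_eq_inv_mul, one_div]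
      exact mul_le_mul_of_nonneg_left ((hsub _).le_Rineq S X) (inv_nonneg.2 (hα _).le)
  exact ⟨key, fun 𝒳 h𝒳 => Finset.sup'_congr h𝒳 rfl fun X _ => (key X).symm⟩
end

section
/- Let S ⊆ V and ī ∈ [m] satisfy: (i) for every j ∈ S there exists k_j ∈ V∖S with ρ^ī_j({k_j}) = 0 and f_ī(S)/α_ī = min_{i∈[m]} f_i(S)/α_i = min_{i∈[m]} f_i((S∖{j})∪{k_j})/α_i = min_{i∈[m]} f_i(S∪{k_j})/α_i; and (ii) ī attains min_{i∈[m]} f_i(S)/α_i and for every j ∈ V∖S, (f_ī(S)+ρ^ī_j(S))/α_ī = min_{i∈[m]} f_i(S∪{j})/α_i. Then there exist n+1 subsets X_0,…,X_n ⊆ V such that the n+1 points (min_{i∈[m]} f_i(X_t)/α_i, χ_{X_t}) ∈ ℝ^{1+n} are affinely independent and each satisfies min_{i∈[m]} f_i(X_t)/α_i = (1/α_ī)·R_ī(S, χ_{X_t}); hence the inequality η ≤ (1/α_ī)·R_ī(S, x) defines a facet of the convex hull of F = {(η,x) ∈ ℝ×{0,1}^V : η ≤ (1/α_{i(T)})·R_{i(T)}(T,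 x) for all T ⊆ V}. -/
/-!
The points used are `S` itself, `S ∪ {j}` for `j ∉ S`, and `(S ∖ {j}) ∪ {k_j}` for `j ∈ S`.

Tightness at `S` and at `S ∪ {j}` is exactly condition (ii). For `j ∈ S`, submodularity and
monotonicity squeeze `0 ≤ ρ_j(V ∖ {j}) ≤ ρ_j({k_j}) = 0`, so the right-hand side at
`(S ∖ {j}) ∪ {k_j}` is `f(S) + ρ_{k_j}(S)`, and conditions (i) and (ii) identify it with the
minimum there.

For affine independence only the `x`-coordinates matter. Relative to `χ_S` the points are
`e_j` for `j ∉ S` and `e_{k_j} - e_j` for `j ∈ S`, with `k_j ∉ S`. In a vanishing combination,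
the coordinates in `S` kill the coefficients of the second kind, and then the coordinates outside
`S` kill those of the first kind.
-/

open Finset

lemma Rineq_chi_self {n : ℕ} (g : Finset (Fin n) → ℝ) (S : Finset (Fin n)) :
    Rineq g S (chi S) = g S := by
  have h1 : ∑ j ∈ S, marg g j (Finset.univ \ {j}) * (1 - chi S j) = 0 :=
    Finset.sum_eq_zero fun j hj => by simp [chi, hj]
  have h2 : ∑ j ∈ Finset.univ \ S, marg g j S * chi S j = 0 :=
    Finset.sum_eq_zero fun j hj => by
      have : j ∉ S := by simpa using hj
      simp [chi, this]
  rw [Rineq, h1, h2]; ring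

lemma Rineq_chi_insert {n : ℕ} (g : Finset (Fin n) → ℝ) (S : Finset (Fin n)) {j : Fin n}
    (hj : j ∉ S) : Rineq g S (chi (insert j S)) = g S + marg g j S := by
  have h1 : ∑ i ∈ S, marg g i (Finset.univ \ {i}) * (1 - chi (insert j S) i) = 0 :=
    Finset.sum_eq_zero fun i hi => by simp [chi, hi]
  have h2 : ∑ i ∈ Finset.univ \ S, marg g i S * chi (insert j S) i = marg g j S := by
    rw [Finset.sum_eq_single_of_mem j (by simpa using hj)]
    · simp [chi]
    · intro i hi hij
      have : i ∉ S := by simpa using hi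
      simp [chi, this, hij]
  rw [Rineq, h1, h2]; ring

lemma Rineq_chi_swap {n : ℕ} (g : Finset (Fin n) → ℝ) (S : Finset (Fin n)) {j k : Fin n}
    (hj : j ∈ S) (hk : k ∉ S) :
    Rineq g S (chi (insert k (S.erase j)))
      = g S - marg g j (Finset.univ \ {j}) + marg g k S := by
  have hjk : j ≠ k := fun h => hk (h ▸ hj)
  have h1 : ∑ i ∈ S, marg g i (Finset.univ \ {i}) * (1 - chi (insert k (S.erase j)) i)
      = marg g j (Finset.univ \ {j}) := by
    rw [Finset.sum_eq_single_of_mem j hj]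
    · simp [chi, hjk]
    · intro i hi hij
      simp [chi, hi, hij]
  have h2 : ∑ i ∈ Finset.univ \ S, marg g i S * chi (insert k (S.erase j)) i
      = marg g k S := by
    rw [Finset.sum_eq_single_of_mem k (by simpa using hk)]
    · simp [chi]
    · intro i hi hik
      have : i ∉ S := by simpa using hi
      simp [chi, this, hik]
  rw [Rineq, h1, h2]

lemma marg_compl_eq_zero {n : ℕ} {g : Finset (Fin n) → ℝ} (hsub : SubmodularFn g)
    (hmono : MonotoneFn g) {j k : Fin n} (hkj : k ≠ j) (h : marg g j {k} = 0) :
    marg g j (Finset.univ \ {j}) = 0 := by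
  have h1 := hsub {k} (Finset.univ \ {j}) (by simpa using hkj) j (by simp)
  have h2 := hmono (Finset.univ \ {j}) (insert j (Finset.univ \ {j}))
    (Finset.subset_insert _ _)
  unfold marg at *
  linarith

/-- The sets `S`, `(S ∖ {j}) ∪ {k j}` for `j ∈ S`, and `S ∪ {j}` for `j ∉ S`; the set attached
to `j` has index `j.succ`. -/
def tightSets {n : ℕ} (S : Finset (Fin n)) (k : Fin n → Fin n) : Fin (n + 1) → Finset (Fin n) :=
  Fin.cases S fun j => if j ∈ S then insert (k j) (S.erase j) else insert j S

/-- Affine independence is already visible in the `x`-coordinates, so the first coordinate `v` is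
arbitrary. -/
lemma affineIndependent_tightSets {n : ℕ} (S : Finset (Fin n)) (k : Fin n → Fin n)
    (hk : ∀ j ∈ S, k j ∉ S) (v : Fin (n + 1) → ℝ) :
    AffineIndependent ℝ (fun t => ((v t, chi (tightSets S k t)) : ℝ × (Fin n → ℝ))) := by
  rw [affineIndependent_iff_of_fintype]
  intro w hw0 hw
  -- As the weights sum to zero, positions may be measured from `χ_S`.
  rw [Finset.weightedVSub_eq_weightedVSubOfPoint_of_sum_eq_zero _ _ _ hw0
    ((0, chi S) : ℝ × (Fin n → ℝ)), Finset.weightedVSubOfPoint_apply] at hw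
  have hcoord : ∀ c : Fin n,
      ∑ i : Fin n, w i.succ * (chi (tightSets S k i.succ) c - chi S c) = 0 := by
    intro c
    have := congrFun (congrArg Prod.snd hw) c
    simpa [Prod.snd_sum, Finset.sum_apply, Fin.sum_univ_succ, tightSets] using this
  have hS : ∀ j ∈ S, w j.succ = 0 := by
    intro j hj
    have h := hcoord j
    rw [Finset.sum_eq_single_of_mem j (Finset.mem_univ j)] at h
    · have hjk : j ≠ k j := fun e => hk j hj (e ▸ hj)
      simpa [tightSets, chi, hj, hjk] using h
    · intro i _ hij
      by_cases hi : i ∈ S <;> simp [tightSets, chi, hi, hj, hij.symm]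
  have hsucc : ∀ j : Fin n, w j.succ = 0 := by
    intro j
    by_cases hj : j ∈ S
    · exact hS j hj
    have h := hcoord j
    rw [Finset.sum_eq_single_of_mem j (Finset.mem_univ j)] at h
    · simpa [tightSets, chi, hj] using h
    · intro i _ hij
      by_cases hi : i ∈ S
      · simp [hS i hi]
      · simp [tightSets, chi, hi, hj, hij.symm]
  intro t
  refine Fin.cases ?_ hsucc t
  simpa [Fin.sum_univ_succ, hsucc] using hw0

/-- Under the facet conditions (i) and (ii), there exist `n+1` subsets
`X_0,…,X_n ⊆ V` such that the points `(min_i f_i(X_t)/α_i, χ_{X_t}) ∈ ℝ^{1+n}` are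
affinely independent and each lies on the hyperplane
`η = (1/α_ī)·R_ī(S, x)` of the submodular inequality generated at `S` with index `ī`. -/
theorem stmt_2 {n m : ℕ} (f : Fin m → Finset (Fin n) → ℝ) (α : Fin m → ℝ)
    (hm : (Finset.univ : Finset (Fin m)).Nonempty)
    (hsub : ∀ i, SubmodularFn (f i)) (hmono : ∀ i, MonotoneFn (f i))
    (hnorm : ∀ i, f i ∅ = 0) (hα : ∀ i, 0 < α i)
    (S : Finset (Fin n)) (ib : Fin m)
    -- condition (i)
    (hcond1 : ∀ j ∈ S, ∃ k : Fin n, k ∉ S ∧ marg (f ib) j {k} = 0 ∧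
      f ib S / α ib = Finset.univ.inf' hm (fun i => f i S / α i) ∧
      Finset.univ.inf' hm (fun i => f i S / α i)
        = Finset.univ.inf' hm (fun i => f i (insert k (S.erase j)) / α i) ∧
      Finset.univ.inf' hm (fun i => f i S / α i)
        = Finset.univ.inf' hm (fun i => f i (insert k S) / α i))
    -- condition (ii): ī attains the minimum at S …
    (hcond2a : f ib S / α ib = Finset.univ.inf' hm (fun i => f i S / α i))
    -- … and for every j ∉ S, (f_ī(S)+ρ^ī_j(S))/α_ī = min_i f_i(S∪{j})/α_i
    (hcond2b : ∀ j : Fin n, j ∉ S →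
      (f ib S + marg (f ib) j S) / α ib
        = Finset.univ.inf' hm (fun i => f i (insert j S) / α i)) :
    ∃ Xs : Fin (n + 1) → Finset (Fin n),
      AffineIndependent ℝ (fun t =>
        ((Finset.univ.inf' hm (fun i => f i (Xs t) / α i), chi (Xs t)) :
          ℝ × (Fin n → ℝ))) ∧
      ∀ t : Fin (n + 1),
        Finset.univ.inf' hm (fun i => f i (Xs t) / α i)
          = (1 / α ib) * Rineq (f ib) S (chi (Xs t)) := by
  have hex : ∀ j, ∃ k : Fin n, j ∈ S → k ∉ S ∧ marg (f ib) j {k} = 0 ∧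
      f ib S / α ib = Finset.univ.inf' hm (fun i => f i S / α i) ∧
      Finset.univ.inf' hm (fun i => f i S / α i)
        = Finset.univ.inf' hm (fun i => f i (insert k (S.erase j)) / α i) ∧
      Finset.univ.inf' hm (fun i => f i S / α i)
        = Finset.univ.inf' hm (fun i => f i (insert k S) / α i) := by
    intro j
    by_cases hj : j ∈ S
    · obtain ⟨k, hk⟩ := hcond1 j hj
      exact ⟨k, fun _ => hk⟩
    · exact ⟨j, fun h => absurd h hj⟩
  choose k hk using hex
  refine ⟨tightSets S k, affineIndependent_tightSets S k (fun j hj => (hk j hj).1) _, ?_⟩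
  intro t
  refine Fin.cases ?_ (fun j => ?_) t
  · simp only [tightSets, Fin.cases_zero]
    rw [Rineq_chi_self, ← hcond2a]
    ring
  · by_cases hj : j ∈ S
    · obtain ⟨hkS, hmarg, -, hswap, hadd⟩ := hk j hj
      have hkj : k j ≠ j := fun e => hkS (by rwa [e])
      simp only [tightSets, Fin.cases_succ, if_pos hj]
      rw [Rineq_chi_swap _ _ hj hkS, marg_compl_eq_zero (hsub ib) (hmono ib) hkj hmarg,
        ← hswap, hadd, ← hcond2b _ hkS]
      ring
    · simp only [tightSets, Fin.cases_succ, if_neg hj]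
      rw [Rineq_chi_insert _ _ hj, ← hcond2b j hj]
      ring
end

section
/- Let X̄ ⊆ V and let ī, ī' ∈ [m] with ī ≠ ī'. If f_ī(X̄)/α_ī ≤ f_ī'(X̄)/α_ī', if −ρ^ī_j(V∖{j})/α_ī ≤ −ρ^ī'_j(V∖{j})/α_ī' for all j ∈ X̄, and if ρ^ī_j(X̄)/α_ī ≤ ρ^ī'_j(X̄)/α_ī' for all j ∈ V∖X̄, then for every binary vector x ∈ {0,1}^V one has (1/α_ī)·R_ī(X̄, x) ≤ (1/α_ī')·R_ī'(X̄, x); in particular the submodular inequality generated at X̄ with index ī' is redundant given the one with index ī. -/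
/-!
After division by `α > 0` the right-hand side `R(S, x)` is a linear combination of `f(S) / α`,
the `-ρ_j(V∖{j}) / α` for `j ∈ S`, and the `ρ_j(S) / α` for `j ∉ S`, with weights `1`, `1 - x_j`
and `x_j` (`Rineq_scaled`). On `{0,1}^V` all weights are nonnegative, so termwise comparison of
the coefficients gives the comparison of the right-hand sides.
-/

open Finset

theorem Rineq_scaled {n : ℕ} (g : Finset (Fin n) → ℝ) (a : ℝ) (S : Finset (Fin n))
    (x : Fin n → ℝ) :
    (1 / a) * Rineq g S x = g S / a
      + ∑ j ∈ S, -(marg g j (Finset.univ \ {j})) / a * (1 - x j)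
      + ∑ j ∈ Finset.univ \ S, marg g j S / a * x j := by
  rw [Rineq, mul_add, mul_sub, Finset.mul_sum, Finset.mul_sum, sub_eq_add_neg,
    ← Finset.sum_neg_distrib]
  congr 1
  · congr 1
    · ring
    · exact Finset.sum_congr rfl fun j _ => by ring
  · exact Finset.sum_congr rfl fun j _ => by ring

/-- If the RHS value, the coefficients of `(1−x_j)` for `j ∈ X̄`, and the
coefficients of `x_j` for `j ∈ V∖X̄` of the scaled submodular inequality with index `ī`
are all at most those with index `ī'`, then at every binary point `x ∈ {0,1}^V`,
`(1/α_ī)·R_ī(X̄,x) ≤ (1/α_ī')·R_ī'(X̄,x)`; i.e., the inequality with index `ī'` is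
redundant given the one with index `ī`. -/
theorem stmt_8 {n m : ℕ} (f : Fin m → Finset (Fin n) → ℝ) (α : Fin m → ℝ)
    (hsub : ∀ i, SubmodularFn (f i)) (hmono : ∀ i, MonotoneFn (f i))
    (hnorm : ∀ i, f i ∅ = 0) (hα : ∀ i, 0 < α i)
    (Xb : Finset (Fin n)) (ib ib' : Fin m) (hne : ib ≠ ib')
    (h1 : f ib Xb / α ib ≤ f ib' Xb / α ib')
    (h2 : ∀ j ∈ Xb,
      -(marg (f ib) j (Finset.univ \ {j})) / α ib
        ≤ -(marg (f ib') j (Finset.univ \ {j})) / α ib')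
    (h3 : ∀ j : Fin n, j ∉ Xb → marg (f ib) j Xb / α ib ≤ marg (f ib') j Xb / α ib') :
    ∀ x : Fin n → ℝ, (∀ j, x j = 0 ∨ x j = 1) →
      (1 / α ib) * Rineq (f ib) Xb x ≤ (1 / α ib') * Rineq (f ib') Xb x := by
  intro x hx
  have hx0 : ∀ j, 0 ≤ x j := fun j => by rcases hx j with h | h <;> simp [h]
  have hx1 : ∀ j, 0 ≤ 1 - x j := fun j => by rcases hx j with h | h <;> simp [h]
  rw [Rineq_scaled, Rineq_scaled]
  refine add_le_add (add_le_add h1 (Finset.sum_le_sum fun j hj => ?_))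
    (Finset.sum_le_sum fun j hj => ?_)
  · exact mul_le_mul_of_nonneg_right (h2 j hj) (hx1 j)
  · exact mul_le_mul_of_nonneg_right (h3 j (Finset.mem_sdiff.mp hj).2) (hx0 j)
end

section
/- Let 𝒳 ⊆ 2^V be a nonempty family of feasible subsets, for each i ∈ [m] let X_i^* ∈ 𝒳 be a maximizer of f_i over 𝒳, and let lb_i, ub_i satisfy 0 < lb_i ≤ f_i(X_i^*) ≤ ub_i for every i. If a feasible X'' ∈ 𝒳 satisfies min_{i∈[m]} f_i(X'')/ub_i = max_{X∈𝒳} min_{i∈[m]} f_i(X)/lb_i, then X'' is an optimal solution of the proportion-robust problem: min_{i∈[m]} f_i(X'')/f_i(X_i^*) = max_{X∈𝒳} min_{i∈[m]} f_i(X)/f_i(X_i^*). -/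
open Finset

/-- If a feasible `X'' ∈ 𝒳` satisfies
`min_i f_i(X'')/ub_i = max_{X∈𝒳} min_i f_i(X)/lb_i`, then `X''` is optimal for the
proportion-robust problem. -/
theorem stmt_12 {n m : ℕ} (f : Fin m → Finset (Fin n) → ℝ)
    (hm : (Finset.univ : Finset (Fin m)).Nonempty)
    (hsub : ∀ i, SubmodularFn (f i)) (hmono : ∀ i, MonotoneFn (f i))
    (hnorm : ∀ i, f i ∅ = 0)
    (𝒳 : Finset (Finset (Fin n))) (h𝒳 : 𝒳.Nonempty)
    (Xstar : Fin m → Finset (Fin n))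
    (hXstar : ∀ i, Xstar i ∈ 𝒳 ∧ ∀ X ∈ 𝒳, f i X ≤ f i (Xstar i))
    (lb ub : Fin m → ℝ)
    (hb : ∀ i, 0 < lb i ∧ lb i ≤ f i (Xstar i) ∧ f i (Xstar i) ≤ ub i)
    (X'' : Finset (Fin n)) (hX'' : X'' ∈ 𝒳)
    (heq : Finset.univ.inf' hm (fun i => f i X'' / ub i)
      = 𝒳.sup' h𝒳 (fun X => Finset.univ.inf' hm (fun i => f i X / lb i))) :
    Finset.univ.inf' hm (fun i => f i X'' / f i (Xstar i))
      = 𝒳.sup' h𝒳 (fun X => Finset.univ.inf' hm (fun i => f i X / f i (Xstar i))) := by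
  -- Nonnegativity is what makes division by a smaller positive number increase the ratio.
  have h0 : ∀ i X, 0 ≤ f i X := fun i X => hnorm i ▸ hmono i ∅ X (Finset.empty_subset X)
  have hpos : ∀ i, 0 < f i (Xstar i) := fun i => (hb i).1.trans_le (hb i).2.1
  apply le_antisymm
  · exact Finset.le_sup' (fun X => Finset.univ.inf' hm (fun i => f i X / f i (Xstar i))) hX''
  · refine Finset.sup'_le h𝒳 _ fun X hX => ?_
    calc Finset.univ.inf' hm (fun i => f i X / f i (Xstar i))
        ≤ Finset.univ.inf' hm (fun i => f i X / lb i) :=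
          Finset.inf'_mono_fun fun i _ =>
            div_le_div_of_nonneg_left (h0 i X) (hb i).1 (hb i).2.1
      _ ≤ 𝒳.sup' h𝒳 (fun X => Finset.univ.inf' hm (fun i => f i X / lb i)) :=
          Finset.le_sup' (fun X => Finset.univ.inf' hm (fun i => f i X / lb i)) hX
      _ = Finset.univ.inf' hm (fun i => f i X'' / ub i) := heq.symm
      _ ≤ Finset.univ.inf' hm (fun i => f i X'' / f i (Xstar i)) :=
          Finset.inf'_mono_fun fun i _ =>
            div_le_div_of_nonneg_left (h0 i X'') (hpos i) (hb i).2.2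
end

section
/- Let f be a submodular function on 2^V. Then for all subsets S, X ⊆ V, f(X) ≤ f(S) − Σ_{j∈S∖X} ρ_j(V∖{j}) + Σ_{j∈X∖S} ρ_j(S); equivalently, the Nemhauser–Wolsey submodular inequality generated at S is valid at every subset X of the ground set. -/
/-!
Both sides are compared through `f (S ∪ X)`. Adding the elements of `X \ S` to `S` one at a time,
each increment is at most the marginal value at `S`, the smallest set met
(`le_add_sum_marg`). Adding the elements of `S \ X` to `X` one at a time, the increment of `j`
is at least the marginal value at `V \ {j}`, the largest set avoiding `j`
(`add_sum_marg_le`). Both processes end at `S ∪ X`.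
-/

open Finset

theorem le_add_sum_marg {n : ℕ} {f : Finset (Fin n) → ℝ} (hsub : SubmodularFn f)
    (S T : Finset (Fin n)) (hST : Disjoint S T) :
    f (S ∪ T) ≤ f S + ∑ j ∈ T, marg f j S := by
  induction T using Finset.induction_on with
  | empty => simp
  | insert a T ha ih =>
    rw [Finset.disjoint_insert_right] at hST
    have h := hsub S (S ∪ T) Finset.subset_union_left a (by simp [hST.1, ha])
    have h' := ih hST.2
    rw [Finset.sum_insert ha, Finset.union_insert]
    simp only [marg] at h' ⊢
    linarith

theorem add_sum_marg_le {n : ℕ} {f : Finset (Fin n) → ℝ} (hsub : SubmodularFn f)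
    (X T : Finset (Fin n)) (hXT : Disjoint X T) :
    f X + ∑ j ∈ T, marg f j (Finset.univ \ {j}) ≤ f (X ∪ T) := by
  induction T using Finset.induction_on with
  | empty => simp
  | insert a T ha ih =>
    rw [Finset.disjoint_insert_right] at hXT
    have hsubset : X ∪ T ⊆ Finset.univ \ {a} := by
      intro j hj
      have haU : a ∉ X ∪ T := by simp [hXT.1, ha]
      have hja : j ≠ a := fun h => haU (h ▸ hj)
      simp [hja]
    have h := hsub (X ∪ T) (Finset.univ \ {a}) hsubset a (by simp)
    have h' := ih hXT.2
    rw [Finset.sum_insert ha, Finset.union_insert]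
    simp only [marg] at h' ⊢
    linarith

/-- For a submodular `f` and all `S, X ⊆ V`, the Nemhauser–Wolsey
submodular inequality generated at `S` is valid at `X`:
`f(X) ≤ f(S) − Σ_{j∈S∖X} ρ_j(V∖{j}) + Σ_{j∈X∖S} ρ_j(S)`. -/
theorem stmt_14 {n : ℕ} (f : Finset (Fin n) → ℝ) (hsub : SubmodularFn f) :
    ∀ S X : Finset (Fin n),
      f X ≤ f S - ∑ j ∈ S \ X, marg f j (Finset.univ \ {j})
            + ∑ j ∈ X \ S, marg f j S := by
  intro S X
  have h1 := le_add_sum_marg hsub S (X \ S) Finset.disjoint_sdiff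
  have h2 := add_sum_marg_le hsub X (S \ X) Finset.disjoint_sdiff
  rw [Finset.union_sdiff_self_eq_union] at h1 h2
  rw [Finset.union_comm X S] at h2
  linarith
end
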